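/- arXiv:2405.11838 — 8 statements merged into one kernel-verified Lean document; each statement's English description precedes it below -/
import Mathlib

section
/- Let (G, μ, α) be a Hom-algebra over a field K and let f ∈ G° (i.e. f ∈ G* vanishes on some finite-codimensional Hom-ideal of G). Then there exist a natural number n and functionals e₁,…,eₙ, e′₁,…,e′ₙ ∈ G° such that f(xy) = Σᵢ₌₁ⁿ eᵢ(x) e′ᵢ(y) for all x, y ∈ G. -/
/-!
Let `J` be a finite-codimensional Hom-ideal killed by `f`, and let `g i` be representatives of a
basis of `G ⧸ J` with coordinate functionals `e i`, pulled back to `G`. Every `x` is congruent to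
`∑ i, e i x • g i` modulo `J`, and `f (J · y) = 0` because `J` is an ideal, so
`f (x y) = ∑ i, e i x * f (g i y)`. Both `e i` and `y ↦ f (g i y)` vanish on `J`, hence the same
`J` shows that they lie in the Sweedler dual.
-/

/-- A Hom-ideal of a Hom-algebra `(G, μ, α)`. -/
def IsHomIdeal {K : Type*} [Field K] {G : Type*} [AddCommGroup G] [Module K G]
    (μ : G →ₗ[K] G →ₗ[K] G) (α : G →ₗ[K] G) (J : Submodule K G) : Prop :=
  (∀ a : G, ∀ x ∈ J, μ a x ∈ J) ∧ (∀ a : G, ∀ x ∈ J, μ x a ∈ J) ∧ (∀ x ∈ J, α x ∈ J)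

/-- The Sweedler dual of a Hom-algebra, as a subset of the linear dual. -/
def sweedlerDualSet {K : Type*} [Field K] {G : Type*} [AddCommGroup G] [Module K G]
    (μ : G →ₗ[K] G →ₗ[K] G) (α : G →ₗ[K] G) : Set (Module.Dual K G) :=
  {f | ∃ J : Submodule K G, IsHomIdeal μ α J ∧ FiniteDimensional K (G ⧸ J) ∧
    J ≤ LinearMap.ker f}

/-- If `f ∈ G°`, then `f ∘ μ` splits as a finite sum of tensors of
elements of `G°`: there are `e₁,…,eₙ, e′₁,…,e′ₙ ∈ G°` with
`f (x y) = ∑ i, eᵢ x * e′ᵢ y` for all `x y : G`. -/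
theorem sweedlerDual_mul_split
    {K : Type*} [Field K] {G : Type*} [AddCommGroup G] [Module K G]
    (μ : G →ₗ[K] G →ₗ[K] G) (α : G →ₗ[K] G)
    (hassoc : ∀ g h k : G, μ (α g) (μ h k) = μ (μ g h) (α k))
    (hmult : ∀ g h : G, α (μ g h) = μ (α g) (α h))
    (f : Module.Dual K G) (hf : f ∈ sweedlerDualSet μ α) :
    ∃ (n : ℕ) (e e' : Fin n → Module.Dual K G),
      (∀ i, e i ∈ sweedlerDualSet μ α) ∧ (∀ i, e' i ∈ sweedlerDualSet μ α) ∧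
      ∀ x y : G, f (μ x y) = ∑ i, e i x * e' i y := by
  obtain ⟨J, hJ, hfin, hfJ⟩ := hf
  let b := Module.finBasis K (G ⧸ J)
  choose g hg using fun i => J.mkQ_surjective (b i)
  refine ⟨_, fun i => (b.coord i).comp J.mkQ, fun i => f.comp (μ (g i)),
    fun i => ⟨J, hJ, hfin, fun x hx => ?_⟩, fun i => ⟨J, hJ, hfin, fun y hy => ?_⟩,
    fun x y => ?_⟩
  · have hx0 : J.mkQ x = 0 := by simpa using hx
    rw [LinearMap.mem_ker, LinearMap.comp_apply, hx0, map_zero]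
  · exact hfJ (hJ.1 (g i) y hy)
  · have hmem : x - ∑ i, b.coord i (J.mkQ x) • g i ∈ J := by
      refine J.ker_mkQ.le (LinearMap.mem_ker.2 ?_)
      rw [map_sub, map_sum]
      simp only [map_smul, hg, Module.Basis.coord_apply, b.sum_repr, sub_self]
    have h0 : f (μ (x - ∑ i, b.coord i (J.mkQ x) • g i) y) = 0 := hfJ (hJ.2.1 y _ hmem)
    rw [map_sub, LinearMap.sub_apply, map_sub, sub_eq_zero] at h0
    rw [h0]
    simp only [map_sum, map_smul, LinearMap.sum_apply, LinearMap.smul_apply, smul_eq_mul,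
      LinearMap.comp_apply]
end

section
/- Let (G, μ, α) be a Hom-algebra over a field K. Then there exists a linear map Δ : G° → G° ⊗ G° such that for every f ∈ G°, writing Δ(f) = Σ f₍₁₎ ⊗ f₍₂₎, one has Σ f₍₁₎(x) f₍₂₎(y) = f(xy) for all x, y ∈ G, and such that, with α° : G° → G° defined by α°(f) = f ∘ α (which indeed maps G° into G°), the triple (G°, Δ, α°) is a Hom-coalgebra: (α° ⊗ Δ) ∘ Δ = (Δ ⊗ α°) ∘ Δ and Δ ∘ α° = (α° ⊗ α°) ∘ Δ. -/
/-!
The evaluations at points of `G` separate the points of `G°`, and over a field tensor products of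
separating families of functionals are again separating (`dualDistrib_separating`). So an element
of `G° ⊗ G°` or of `G° ⊗ (G° ⊗ G°)` is determined by its values on pairs or triples of elements
of `G`.

If `f ∈ G°` vanishes on a finite-codimensional Hom-ideal `J`, and `g i ∈ G` lift a basis of
`G ⧸ J` with dual basis `e i`, then `f (x y) = ∑ i, e i (x) f (g i y)`. All the functionals on the
right kill `J`, so this exhibits an element of `G° ⊗ G°` (`exists_comul`), which is unique by
separation and hence depends linearly on `f`. Evaluated on triples and pairs, the two coalgebra
identities become `f (α(x) (y z)) = f ((x y) α(z))` and `f (α (x y)) = f (α(x) α(y))`.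
-/

open TensorProduct

lemma finiteDimensional_quot_inf {K : Type*} [Field K] {G : Type*} [AddCommGroup G] [Module K G]
    (J H : Submodule K G) (hJ : FiniteDimensional K (G ⧸ J)) (hH : FiniteDimensional K (G ⧸ H)) :
    FiniteDimensional K (G ⧸ (J ⊓ H)) := by
  have hker : LinearMap.ker (J.mkQ.prod H.mkQ) = J ⊓ H := by
    rw [LinearMap.ker_prod, Submodule.ker_mkQ, Submodule.ker_mkQ]
  let φ : (G ⧸ (J ⊓ H)) →ₗ[K] (G ⧸ J) × (G ⧸ H) :=
    Submodule.liftQ _ (J.mkQ.prod H.mkQ) (le_of_eq hker.symm)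
  have hinj : Function.Injective φ := by
    rw [← LinearMap.ker_eq_bot]
    exact Submodule.ker_liftQ_eq_bot _ _ _ (le_of_eq hker)
  exact FiniteDimensional.of_injective φ hinj

/-- The Sweedler dual of a Hom-algebra, as a submodule of the linear dual. -/
def SweedlerDual {K : Type*} [Field K] {G : Type*} [AddCommGroup G] [Module K G]
    (μ : G →ₗ[K] G →ₗ[K] G) (α : G →ₗ[K] G) : Submodule K (Module.Dual K G) where
  carrier := {f | ∃ J : Submodule K G, IsHomIdeal μ α J ∧ FiniteDimensional K (G ⧸ J) ∧
    J ≤ LinearMap.ker f}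
  zero_mem' := by
    refine ⟨⊤, ⟨fun _ _ _ => trivial, fun _ _ _ => trivial, fun _ _ => trivial⟩, ?_, ?_⟩
    · infer_instance
    · simp
  add_mem' := by
    rintro f g ⟨J, hJ, hfJ, hkJ⟩ ⟨H, hH, hfH, hkH⟩
    refine ⟨J ⊓ H,
      ⟨fun a x hx => ⟨hJ.1 a x hx.1, hH.1 a x hx.2⟩,
       fun a x hx => ⟨hJ.2.1 a x hx.1, hH.2.1 a x hx.2⟩,
       fun x hx => ⟨hJ.2.2 x hx.1, hH.2.2 x hx.2⟩⟩,
      finiteDimensional_quot_inf J H hfJ hfH, ?_⟩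
    intro x hx
    have h1 : f x = 0 := hkJ hx.1
    have h2 : g x = 0 := hkH hx.2
    simp [LinearMap.mem_ker, h1, h2]
  smul_mem' := by
    rintro c f ⟨J, hJ, hfJ, hkJ⟩
    refine ⟨J, hJ, hfJ, fun x hx => ?_⟩
    have h1 : f x = 0 := hkJ hx
    simp [LinearMap.mem_ker, h1]

/-- The map `α° : G° → G°`, `f ↦ f ∘ α`. -/
noncomputable def alphaCirc {K : Type*} [Field K] {G : Type*} [AddCommGroup G] [Module K G]
    (μ : G →ₗ[K] G →ₗ[K] G) (α : G →ₗ[K] G) :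
    SweedlerDual μ α →ₗ[K] SweedlerDual μ α :=
  LinearMap.codRestrict (SweedlerDual μ α)
    (α.dualMap ∘ₗ (SweedlerDual μ α).subtype) (by
      rintro ⟨f, J, hJ, hfin, hker⟩
      refine ⟨J, hJ, hfin, fun x hx => ?_⟩
      have : f (α x) = 0 := hker (hJ.2.2 x hx)
      simpa [LinearMap.mem_ker] using this)

section Separation

variable {K : Type*} [Field K] {M N P : Type*} [AddCommMonoid M] [Module K M]
  [AddCommMonoid N] [Module K N] [AddCommMonoid P] [Module K P]

/-- The functionals `ξ x ⊗ η y` separate the points of `M ⊗ N` as soon as the `ξ x` separate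
those of `M` and the `η y` those of `N`. The modules are only required to be additive monoids, so
that the lemma applies directly to the additive monoid structure a submodule carries. -/
lemma dualDistrib_separating [Module.Free K N] {X Y : Type*}
    (ξ : X → Module.Dual K M) (η : Y → Module.Dual K N)
    (hξ : ∀ m m', (∀ x, ξ x m = ξ x m') → m = m')
    (hη : ∀ n n', (∀ y, η y n = η y n') → n = n') (s t : M ⊗[K] N)
    (hst : ∀ x y, TensorProduct.dualDistrib K M N (ξ x ⊗ₜ η y) s =
      TensorProduct.dualDistrib K M N (ξ x ⊗ₜ η y) t) : s = t := by
  classical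
  let b := Module.Free.chooseBasis K N
  have eval_contract : ∀ x y (u : M ⊗[K] N), η y (TensorProduct.lid K N ((ξ x).rTensor N u)) =
      TensorProduct.dualDistrib K M N (ξ x ⊗ₜ η y) u := by
    intro x y u
    induction u <;> simp_all
  have contract_eq : ∀ x, TensorProduct.lid K N ((ξ x).rTensor N s) =
      TensorProduct.lid K N ((ξ x).rTensor N t) := fun x =>
    hη _ _ fun y => by rw [eval_contract, eval_contract, hst]
  -- Applying `ξ x` to the `i`-th coefficient of `u` gives the `i`-th coordinate of the
  -- contraction of `u` with `ξ x`.
  have coord_eq : ∀ x i (u : M ⊗[K] N),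
      ξ x (TensorProduct.equivFinsuppOfBasisRight b u i) =
      b.repr (TensorProduct.lid K N ((ξ x).rTensor N u)) i := by
    intro x i u
    induction u <;> simp_all [mul_comm]
  apply (TensorProduct.equivFinsuppOfBasisRight b).injective
  ext i
  exact hξ _ _ fun x => by rw [coord_eq, coord_eq, contract_eq]

lemma dualDistrib_assoc (φ : Module.Dual K M) (ψ : Module.Dual K N) (χ : Module.Dual K P)
    (t : (M ⊗[K] N) ⊗[K] P) :
    TensorProduct.dualDistrib K M (N ⊗[K] P) (φ ⊗ₜ TensorProduct.dualDistrib K N P (ψ ⊗ₜ χ))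
        (TensorProduct.assoc K M N P t) =
      TensorProduct.dualDistrib K (M ⊗[K] N) P
        (TensorProduct.dualDistrib K M N (φ ⊗ₜ ψ) ⊗ₜ χ) t := by
  induction t with
  | zero => simp
  | add a b ha hb => simp only [map_add, ha, hb]
  | tmul u p =>
    induction u with
    | zero => simp
    | add a b ha hb => simp only [TensorProduct.add_tmul, map_add, ha, hb]
    | tmul m n => simp [mul_assoc]

lemma dualDistrib_map {M' N' : Type*} [AddCommMonoid M'] [Module K M']
    [AddCommMonoid N'] [Module K N'] (F : M →ₗ[K] M') (H : N →ₗ[K] N') (φ : Module.Dual K M')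
    (ψ : Module.Dual K N') (t : M ⊗[K] N) :
    TensorProduct.dualDistrib K M' N' (φ ⊗ₜ ψ) (TensorProduct.map F H t) =
      TensorProduct.dualDistrib K M N ((φ ∘ₗ F) ⊗ₜ (ψ ∘ₗ H)) t := by
  induction t <;> simp_all

end Separation

section Comultiplication

variable {K : Type*} [Field K] {G : Type*} [AddCommGroup G] [Module K G]
  (μ : G →ₗ[K] G →ₗ[K] G) (α : G →ₗ[K] G)

/-- Stated explicitly because instance search does not match the additive monoid structure of
the submodule `G°` with the one underlying its additive group structure. -/
instance sweedlerDual_free : Module.Free K (SweedlerDual μ α) :=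
  Module.Free.of_divisionRing K (SweedlerDual μ α)

/-- Evaluation at `x : G`, as a functional on `G°`. -/
def evalAt (x : G) : Module.Dual K (SweedlerDual μ α) :=
  Module.Dual.eval K G x ∘ₗ (SweedlerDual μ α).subtype

@[simp]
lemma evalAt_apply (x : G) (f : SweedlerDual μ α) :
    evalAt μ α x f = (f : Module.Dual K G) x := rfl

lemma evalAt_ext (f g : SweedlerDual μ α) (h : ∀ x, evalAt μ α x f = evalAt μ α x g) :
    f = g :=
  Subtype.ext (LinearMap.ext h)

/-- The functional `f ⊗ g ↦ f(x) g(y)` on `G° ⊗ G°`. -/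
noncomputable def evalAt₂ (x y : G) : Module.Dual K (SweedlerDual μ α ⊗[K] SweedlerDual μ α) :=
  TensorProduct.dualDistrib K _ _ (evalAt μ α x ⊗ₜ evalAt μ α y)

lemma dualDistrib_subtype (t : SweedlerDual μ α ⊗[K] SweedlerDual μ α) (x y : G) :
    TensorProduct.dualDistrib K G G
        (TensorProduct.map (SweedlerDual μ α).subtype (SweedlerDual μ α).subtype t)
        (x ⊗ₜ[K] y) = evalAt₂ μ α x y t := by
  unfold evalAt₂
  induction t <;> simp_all

lemma evalAt₂_ext {s t : SweedlerDual μ α ⊗[K] SweedlerDual μ α}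
    (h : ∀ x y, evalAt₂ μ α x y s = evalAt₂ μ α x y t) : s = t :=
  dualDistrib_separating _ _ (evalAt_ext μ α) (evalAt_ext μ α) s t h

lemma evalAt₃_ext {s t : SweedlerDual μ α ⊗[K] (SweedlerDual μ α ⊗[K] SweedlerDual μ α)}
    (h : ∀ x y z, TensorProduct.dualDistrib K _ _ (evalAt μ α x ⊗ₜ evalAt₂ μ α y z) s =
      TensorProduct.dualDistrib K _ _ (evalAt μ α x ⊗ₜ evalAt₂ μ α y z) t) : s = t :=
  dualDistrib_separating (evalAt μ α) (fun p : G × G => evalAt₂ μ α p.1 p.2)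
    (evalAt_ext μ α) (fun _ _ huv => evalAt₂_ext μ α fun y z => huv (y, z)) s t
    fun x p => h x p.1 p.2

/-- The functional `(x, y) ↦ f(xy)` is represented by the element `∑ i, e i ⊗ f (g i ·)` of
`G° ⊗ G°`, for `g i` lifting a basis of `G ⧸ J` and `e i` the coordinates in that basis. -/
lemma exists_comul (f : SweedlerDual μ α) :
    ∃ t : SweedlerDual μ α ⊗[K] SweedlerDual μ α,
      ∀ x y, evalAt₂ μ α x y t = (f : Module.Dual K G) (μ x y) := by
  obtain ⟨f, J, hJ, hfin, hker⟩ := f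
  let b := Module.finBasis K (G ⧸ J)
  choose g hg using fun i => J.mkQ_surjective (b i)
  let e : Fin (Module.finrank K (G ⧸ J)) → SweedlerDual μ α := fun i =>
    ⟨b.coord i ∘ₗ J.mkQ, J, hJ, hfin, fun x hx => by
      simp [(Submodule.Quotient.mk_eq_zero J).mpr hx]⟩
  let d : Fin (Module.finrank K (G ⧸ J)) → SweedlerDual μ α := fun i =>
    ⟨f ∘ₗ μ (g i), J, hJ, hfin, fun x hx => hker (hJ.1 _ x hx)⟩
  refine ⟨∑ i, e i ⊗ₜ d i, fun x y => ?_⟩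
  have sub_mem : x - ∑ i, b.repr (J.mkQ x) i • g i ∈ J := by
    rw [← Submodule.Quotient.mk_eq_zero, ← Submodule.mkQ_apply, map_sub, map_sum, sub_eq_zero]
    simp only [map_smul, hg]
    exact (b.sum_repr _).symm
  have f_eq : f (μ (x - ∑ i, b.repr (J.mkQ x) i • g i) y) = 0 := hker (hJ.2.1 y _ sub_mem)
  simp only [map_sub, map_sum, map_smul, LinearMap.sub_apply, LinearMap.sum_apply,
    LinearMap.smul_apply, smul_eq_mul, sub_eq_zero] at f_eq
  simp [evalAt₂, e, d, f_eq]

end Comultiplication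

/-- The Sweedler dual `(G°, Δ, α°)` of a Hom-algebra `(G, μ, α)` is a
Hom-coalgebra: there is a linear map `Δ : G° → G° ⊗ G°` such that evaluating `Δ f`
(viewed in `(G ⊗ G)*` via the canonical map) at `x ⊗ y` gives `f (x y)`, and with
`α° : G° → G°`, `f ↦ f ∘ α`, one has Hom-coassociativity
`(α° ⊗ Δ) ∘ Δ = (Δ ⊗ α°) ∘ Δ` (up to the associator) and
comultiplicativity `Δ ∘ α° = (α° ⊗ α°) ∘ Δ`. -/
theorem sweedlerDual_homCoalgebra
    {K : Type*} [Field K] {G : Type*} [AddCommGroup G] [Module K G]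
    (μ : G →ₗ[K] G →ₗ[K] G) (α : G →ₗ[K] G)
    (hassoc : ∀ g h k : G, μ (α g) (μ h k) = μ (μ g h) (α k))
    (hmult : ∀ g h : G, α (μ g h) = μ (α g) (α h)) :
    ∃ Δ : SweedlerDual μ α →ₗ[K] (SweedlerDual μ α ⊗[K] SweedlerDual μ α),
      (∀ (f : SweedlerDual μ α) (x y : G),
        TensorProduct.dualDistrib K G G
          (TensorProduct.map (SweedlerDual μ α).subtype (SweedlerDual μ α).subtype (Δ f))
          (x ⊗ₜ[K] y) = (f : Module.Dual K G) (μ x y)) ∧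
      (TensorProduct.map (alphaCirc μ α) Δ) ∘ₗ Δ =
        (TensorProduct.assoc K (SweedlerDual μ α) (SweedlerDual μ α)
          (SweedlerDual μ α)).toLinearMap ∘ₗ (TensorProduct.map Δ (alphaCirc μ α)) ∘ₗ Δ ∧
      Δ ∘ₗ alphaCirc μ α = (TensorProduct.map (alphaCirc μ α) (alphaCirc μ α)) ∘ₗ Δ := by
  choose D hD using exists_comul μ α
  let Δ : SweedlerDual μ α →ₗ[K] (SweedlerDual μ α ⊗[K] SweedlerDual μ α) :=
    { toFun := D
      map_add' := fun f g => evalAt₂_ext μ α fun x y => by simp [hD]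
      map_smul' := fun c f => evalAt₂_ext μ α fun x y => by simp [hD] }
  have evalAt₂_comp : ∀ x y, evalAt₂ μ α x y ∘ₗ Δ = evalAt μ α (μ x y) :=
    fun x y => LinearMap.ext fun f => hD f x y
  have evalAt_comp : ∀ x, evalAt μ α x ∘ₗ alphaCirc μ α = evalAt μ α (α x) := fun _ => rfl
  have evalAt₂_Δ : ∀ f x y, TensorProduct.dualDistrib K _ _ (evalAt μ α x ⊗ₜ evalAt μ α y) (Δ f) =
      (f : Module.Dual K G) (μ x y) := hD
  refine ⟨Δ, fun f x y => (dualDistrib_subtype μ α _ x y).trans (hD f x y), ?_, ?_⟩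
  · refine LinearMap.ext fun f => evalAt₃_ext μ α fun x y z => ?_
    have left : TensorProduct.dualDistrib K _ _ (evalAt μ α x ⊗ₜ evalAt₂ μ α y z)
        (TensorProduct.map (alphaCirc μ α) Δ (Δ f)) =
        (f : Module.Dual K G) (μ (α x) (μ y z)) := by
      rw [dualDistrib_map, evalAt_comp, evalAt₂_comp, evalAt₂_Δ]
    have right : TensorProduct.dualDistrib K _ _ (evalAt μ α x ⊗ₜ evalAt₂ μ α y z)
        (TensorProduct.assoc K _ _ _ (TensorProduct.map Δ (alphaCirc μ α) (Δ f))) =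
        (f : Module.Dual K G) (μ (μ x y) (α z)) := by
      rw [evalAt₂, dualDistrib_assoc, ← evalAt₂, dualDistrib_map, evalAt_comp, evalAt₂_comp,
        evalAt₂_Δ]
    exact left.trans ((congrArg _ (hassoc x y z)).trans right.symm)
  · refine LinearMap.ext fun f => evalAt₂_ext μ α fun x y => ?_
    have left : evalAt₂ μ α x y (Δ (alphaCirc μ α f)) = (f : Module.Dual K G) (α (μ x y)) :=
      hD _ x y
    have right : evalAt₂ μ α x y
        (TensorProduct.map (alphaCirc μ α) (alphaCirc μ α) (Δ f)) =
        (f : Module.Dual K G) (μ (α x) (α y)) := by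
      rw [evalAt₂, dualDistrib_map, evalAt_comp, evalAt_comp, evalAt₂_Δ]
    exact left.trans ((congrArg _ (hmult x y)).trans right.symm)
end

section
/- Let f : (G,μ,α) → (G',μ',α') be a morphism of Hom-algebras over a field K, and let Δ : G° → G° ⊗ G° and Δ' : G'° → G'° ⊗ G'° be the comultiplications on the Sweedler duals determined by the pairing conditions Σ f₍₁₎(x) f₍₂₎(y) = f(xy). Define f° : G'° → G° by f°(b*) = b* ∘ f (this indeed maps G'° into G°), and α°(g) = g ∘ α, α'°(h) = h ∘ α'. Then f° is a morphism of Hom-coalgebras: Δ ∘ f° = (f° ⊗ f°) ∘ Δ' and α° ∘ f° = f° ∘ α'°. -/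
/-!
Evaluated at `b` and paired with `x ⊗ y`, the two sides of `Δ ∘ f° = (f° ⊗ f°) ∘ Δ'` give
`b (f (xy))` and `b (f(x) f(y))`; for the second, `f° ⊗ f°` is moved across the pairing by
`dualDistrib_map_fCirc`. The values agree because `f` is multiplicative. Over a field this
suffices: an element of `A ⊗ B`, for spaces of functionals `A` and `B`, is determined by its
pairings with pure tensors (`ext_of_dualDistrib`). The identity `α° ∘ f° = f° ∘ α'°` is
`f ∘ α = α' ∘ f` followed by a functional.
-/

open TensorProduct

lemma preimage_finiteDimensional_quot
    {K : Type*} [Field K] {G G' : Type*}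
    [AddCommGroup G] [Module K G] [AddCommGroup G'] [Module K G']
    (f : G →ₗ[K] G') (J : Submodule K G') (hfin : FiniteDimensional K (G' ⧸ J)) :
    FiniteDimensional K (G ⧸ J.comap f) := by
  have hker : LinearMap.ker (J.mkQ ∘ₗ f) = J.comap f := by
    rw [LinearMap.ker_comp, Submodule.ker_mkQ]
  let φ : (G ⧸ J.comap f) →ₗ[K] (G' ⧸ J) :=
    Submodule.liftQ _ (J.mkQ ∘ₗ f) (le_of_eq hker.symm)
  have hinj : Function.Injective φ := by
    rw [← LinearMap.ker_eq_bot]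
    exact Submodule.ker_liftQ_eq_bot _ _ _ (le_of_eq hker)
  exact FiniteDimensional.of_injective φ hinj

/-- The map `f° : G'° → G°`, `b* ↦ b* ∘ f`, induced by a morphism `f` of Hom-algebras. -/
noncomputable def fCirc
    {K : Type*} [Field K] {G G' : Type*}
    [AddCommGroup G] [Module K G] [AddCommGroup G'] [Module K G']
    (μ : G →ₗ[K] G →ₗ[K] G) (α : G →ₗ[K] G)
    (μ' : G' →ₗ[K] G' →ₗ[K] G') (α' : G' →ₗ[K] G')
    (f : G →ₗ[K] G')
    (hfmul : ∀ x y : G, f (μ x y) = μ' (f x) (f y))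
    (hfα : ∀ x : G, f (α x) = α' (f x)) :
    SweedlerDual μ' α' →ₗ[K] SweedlerDual μ α :=
  LinearMap.codRestrict (SweedlerDual μ α)
    (f.dualMap ∘ₗ (SweedlerDual μ' α').subtype) (by
      rintro ⟨b, J, hJ, hfin, hker⟩
      refine ⟨J.comap f, ⟨?_, ?_, ?_⟩, preimage_finiteDimensional_quot f J hfin, ?_⟩
      · intro a x hx
        simp only [Submodule.mem_comap] at hx ⊢
        rw [hfmul]
        exact hJ.1 (f a) (f x) hx
      · intro a x hx
        simp only [Submodule.mem_comap] at hx ⊢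
        rw [hfmul]
        exact hJ.2.1 (f a) (f x) hx
      · intro x hx
        simp only [Submodule.mem_comap] at hx ⊢
        rw [hfα]
        exact hJ.2.2 (f x) hx
      · intro x hx
        have : b (f x) = 0 := hker hx
        simpa [LinearMap.mem_ker] using this)

/-- A tensor of two spaces of functionals `A` and `B` over a field is determined by its pairings
with pure tensors. Writing `s = ∑ aᵢ ⊗ cᵢ` and `t = ∑ a'ᵢ ⊗ cᵢ` with `c` a basis of `B`, equality
of all pairings gives `∑ aᵢ(x) cᵢ = ∑ a'ᵢ(x) cᵢ`, hence `aᵢ(x) = a'ᵢ(x)`, for every `x`. -/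
lemma ext_of_dualDistrib {K V W : Type*} [Field K] [AddCommGroup V] [Module K V]
    [AddCommGroup W] [Module K W]
    {A : Submodule K (Module.Dual K V)} {B : Submodule K (Module.Dual K W)} (s t : A ⊗[K] B)
    (h : ∀ (x : V) (y : W),
      TensorProduct.dualDistrib K V W (TensorProduct.map A.subtype B.subtype s) (x ⊗ₜ[K] y) =
      TensorProduct.dualDistrib K V W (TensorProduct.map A.subtype B.subtype t) (x ⊗ₜ[K] y)) :
    s = t := by
  let c := Module.Basis.ofVectorSpace K B
  obtain ⟨a, rfl⟩ := TensorProduct.eq_repr_basis_right c s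
  obtain ⟨a', rfl⟩ := TensorProduct.eq_repr_basis_right c t
  suffices a = a' by rw [this]
  ext i x
  have hx : Finsupp.linearCombination K c
        (a.mapRange (fun u : A => (u : Module.Dual K V) x) (by simp)) =
      Finsupp.linearCombination K c
        (a'.mapRange (fun u : A => (u : Module.Dual K V) x) (by simp)) := by
    rw [Finsupp.linearCombination_apply, Finsupp.linearCombination_apply,
      Finsupp.sum_mapRange_index (by simp), Finsupp.sum_mapRange_index (by simp)]
    ext y
    simpa [Finsupp.sum, LinearMap.sum_apply] using h x y
  simpa using DFunLike.congr_fun (c.linearIndependent hx) i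

/-- `f° ⊗ f°` is adjoint to `f ⊗ f` for the pairing of `G° ⊗ G°` with `G ⊗ G`. -/
lemma dualDistrib_map_fCirc {K : Type*} [Field K] {G G' : Type*}
    [AddCommGroup G] [Module K G] [AddCommGroup G'] [Module K G']
    (μ : G →ₗ[K] G →ₗ[K] G) (α : G →ₗ[K] G)
    (μ' : G' →ₗ[K] G' →ₗ[K] G') (α' : G' →ₗ[K] G')
    (f : G →ₗ[K] G')
    (hfmul : ∀ x y : G, f (μ x y) = μ' (f x) (f y))
    (hfα : ∀ x : G, f (α x) = α' (f x))
    (t : SweedlerDual μ' α' ⊗[K] SweedlerDual μ' α') (x y : G) :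
    TensorProduct.dualDistrib K G G
        (TensorProduct.map (SweedlerDual μ α).subtype (SweedlerDual μ α).subtype
          (TensorProduct.map (fCirc μ α μ' α' f hfmul hfα) (fCirc μ α μ' α' f hfmul hfα) t))
        (x ⊗ₜ[K] y) =
      TensorProduct.dualDistrib K G' G'
        (TensorProduct.map (SweedlerDual μ' α').subtype (SweedlerDual μ' α').subtype t)
        (f x ⊗ₜ[K] f y) := by
  induction t with
  | zero => simp
  | tmul u v => simp [fCirc]
  | add s t hs ht => simp only [map_add, LinearMap.add_apply, hs, ht]

/-- If `f : G → G'` is a morphism of Hom-algebras and `Δ`, `Δ'` are the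
comultiplications on the Sweedler duals `G°` and `G'°` (characterized by the pairing
conditions), then `f° : G'° → G°`, `b* ↦ b* ∘ f`, is a morphism of Hom-coalgebras:
`Δ ∘ f° = (f° ⊗ f°) ∘ Δ'` and `α° ∘ f° = f° ∘ α'°`. -/
theorem fCirc_homCoalgebra_morphism
    {K : Type*} [Field K] {G G' : Type*}
    [AddCommGroup G] [Module K G] [AddCommGroup G'] [Module K G']
    (μ : G →ₗ[K] G →ₗ[K] G) (α : G →ₗ[K] G)
    (μ' : G' →ₗ[K] G' →ₗ[K] G') (α' : G' →ₗ[K] G')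
    (hassoc : ∀ g h k : G, μ (α g) (μ h k) = μ (μ g h) (α k))
    (hmult : ∀ g h : G, α (μ g h) = μ (α g) (α h))
    (hassoc' : ∀ g h k : G', μ' (α' g) (μ' h k) = μ' (μ' g h) (α' k))
    (hmult' : ∀ g h : G', α' (μ' g h) = μ' (α' g) (α' h))
    (f : G →ₗ[K] G')
    (hfmul : ∀ x y : G, f (μ x y) = μ' (f x) (f y))
    (hfα : ∀ x : G, f (α x) = α' (f x))
    (Δ : SweedlerDual μ α →ₗ[K] (SweedlerDual μ α ⊗[K] SweedlerDual μ α))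
    (hΔ : ∀ (g : SweedlerDual μ α) (x y : G),
      TensorProduct.dualDistrib K G G
        (TensorProduct.map (SweedlerDual μ α).subtype (SweedlerDual μ α).subtype (Δ g))
        (x ⊗ₜ[K] y) = (g : Module.Dual K G) (μ x y))
    (Δ' : SweedlerDual μ' α' →ₗ[K] (SweedlerDual μ' α' ⊗[K] SweedlerDual μ' α'))
    (hΔ' : ∀ (g : SweedlerDual μ' α') (x y : G'),
      TensorProduct.dualDistrib K G' G'
        (TensorProduct.map (SweedlerDual μ' α').subtype (SweedlerDual μ' α').subtype (Δ' g))
        (x ⊗ₜ[K] y) = (g : Module.Dual K G') (μ' x y)) :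
    Δ ∘ₗ fCirc μ α μ' α' f hfmul hfα =
      (TensorProduct.map (fCirc μ α μ' α' f hfmul hfα) (fCirc μ α μ' α' f hfmul hfα)) ∘ₗ Δ' ∧
    alphaCirc μ α ∘ₗ fCirc μ α μ' α' f hfmul hfα =
      fCirc μ α μ' α' f hfmul hfα ∘ₗ alphaCirc μ' α' := by
  refine ⟨LinearMap.ext fun b => ?_, LinearMap.ext fun b => Subtype.ext (LinearMap.ext fun x => ?_)⟩
  · refine ext_of_dualDistrib _ _ fun x y => ?_
    rw [LinearMap.comp_apply, LinearMap.comp_apply, hΔ, dualDistrib_map_fCirc, hΔ']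
    exact congrArg (b : Module.Dual K G') (hfmul x y)
  · exact congrArg (b : Module.Dual K G') (hfα x)
end

section
/- Let (G, μ, α) be a finite-dimensional Hom-algebra over a field K, and let Δ : G* → G* ⊗ G* be the unique linear map satisfying Σ f₍₁₎(x) f₍₂₎(y) = f(xy) for all f ∈ G* and x, y ∈ G (where Δ(f) = Σ f₍₁₎ ⊗ f₍₂₎, using the canonical isomorphism G* ⊗ G* ≅ (G ⊗ G)* in finite dimension). Then (G*, Δ, α*) with α*(f) = f ∘ α is a Hom-coalgebra: (α* ⊗ Δ) ∘ Δ = (Δ ⊗ α*) ∘ Δ and Δ ∘ α* = (α* ⊗ α*) ∘ Δ. -/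
/-!
In finite dimension the canonical maps `G* ⊗ G* → (G ⊗ G)*` and
`G* ⊗ (G* ⊗ G*) → (G ⊗ (G ⊗ G))*` are injective, so an identity between tensors of functionals
may be checked by pairing both sides with pure tensors of vectors. Under this pairing
`(α* ⊗ Δ)(Δ f)` becomes `f (α x · (y z))` and `(Δ ⊗ α*)(Δ f)` becomes `f ((x y) · α z)`, which
agree by Hom-associativity; likewise `Δ (α* f)` becomes `f (α (x y))` and `(α* ⊗ α*)(Δ f)` becomes
`f (α x · α y)`, which agree by multiplicativity.
-/

open TensorProduct

namespace HomDual

variable {K : Type*} [Field K] {G : Type*} [AddCommGroup G] [Module K G]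

theorem dualDistrib_injective {M N : Type*} [AddCommGroup M] [Module K M] [AddCommGroup N]
    [Module K N] [FiniteDimensional K M] [FiniteDimensional K N] :
    Function.Injective (TensorProduct.dualDistrib K M N) :=
  (TensorProduct.dualDistribEquiv K M N).injective

theorem ext_two [FiniteDimensional K G] {s t : Module.Dual K G ⊗[K] Module.Dual K G}
    (h : ∀ x y : G, TensorProduct.dualDistrib K G G s (x ⊗ₜ[K] y) =
      TensorProduct.dualDistrib K G G t (x ⊗ₜ[K] y)) : s = t :=
  dualDistrib_injective (TensorProduct.ext' h)

/-- The canonical map `G* ⊗ (G* ⊗ G*) → (G ⊗ (G ⊗ G))*`, obtained by iterating `dualDistrib`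
along the right-nested bracketing. -/
noncomputable def dualDistribThree (K : Type*) [Field K] (G : Type*) [AddCommGroup G] [Module K G] :
    Module.Dual K G ⊗[K] (Module.Dual K G ⊗[K] Module.Dual K G) →ₗ[K]
      Module.Dual K (G ⊗[K] (G ⊗[K] G)) :=
  TensorProduct.dualDistrib K G (G ⊗[K] G) ∘ₗ
    (TensorProduct.dualDistrib K G G).lTensor (Module.Dual K G)

theorem dualDistribThree_tmul (f : Module.Dual K G) (s : Module.Dual K G ⊗[K] Module.Dual K G)
    (x y z : G) :
    dualDistribThree K G (f ⊗ₜ[K] s) (x ⊗ₜ[K] (y ⊗ₜ[K] z)) =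
      f x * TensorProduct.dualDistrib K G G s (y ⊗ₜ[K] z) := by
  simp [dualDistribThree]

theorem ext_three [FiniteDimensional K G]
    {s t : Module.Dual K G ⊗[K] (Module.Dual K G ⊗[K] Module.Dual K G)}
    (h : ∀ x y z : G, dualDistribThree K G s (x ⊗ₜ[K] (y ⊗ₜ[K] z)) =
      dualDistribThree K G t (x ⊗ₜ[K] (y ⊗ₜ[K] z))) : s = t := by
  have hinj : Function.Injective (dualDistribThree K G) :=
    dualDistrib_injective.comp
      (Module.Flat.lTensor_preserves_injective_linearMap _ dualDistrib_injective)
  apply hinj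
  ext x y z
  exact h x y z

theorem dualDistribThree_assoc_tmul (s : Module.Dual K G ⊗[K] Module.Dual K G)
    (h : Module.Dual K G) (x y z : G) :
    dualDistribThree K G (TensorProduct.assoc K _ _ _ (s ⊗ₜ[K] h)) (x ⊗ₜ[K] (y ⊗ₜ[K] z)) =
      TensorProduct.dualDistrib K G G s (x ⊗ₜ[K] y) * h z := by
  induction s with
  | zero => simp
  | add a b ha hb =>
    simp only [TensorProduct.add_tmul, map_add, LinearMap.add_apply, ha, hb, add_mul]
  | tmul f g => simp [dualDistribThree_tmul, mul_assoc]

theorem dualDistrib_map_dualMap (α : G →ₗ[K] G) (t : Module.Dual K G ⊗[K] Module.Dual K G)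
    (x y : G) :
    TensorProduct.dualDistrib K G G (TensorProduct.map α.dualMap α.dualMap t) (x ⊗ₜ[K] y) =
      TensorProduct.dualDistrib K G G t (α x ⊗ₜ[K] α y) := by
  induction t with
  | zero => simp
  | add a b ha hb => simp only [map_add, LinearMap.add_apply, ha, hb]
  | tmul f g => simp

variable {μ : G →ₗ[K] G →ₗ[K] G} {α : G →ₗ[K] G}
  {Δ : Module.Dual K G →ₗ[K] (Module.Dual K G ⊗[K] Module.Dual K G)}

theorem dualDistribThree_map_right
    (hΔ : ∀ (f : Module.Dual K G) (x y : G),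
      TensorProduct.dualDistrib K G G (Δ f) (x ⊗ₜ[K] y) = f (μ x y))
    (t : Module.Dual K G ⊗[K] Module.Dual K G) (x y z : G) :
    dualDistribThree K G (TensorProduct.map α.dualMap Δ t) (x ⊗ₜ[K] (y ⊗ₜ[K] z)) =
      TensorProduct.dualDistrib K G G t (α x ⊗ₜ[K] μ y z) := by
  induction t with
  | zero => simp
  | add a b ha hb => simp only [map_add, LinearMap.add_apply, ha, hb]
  | tmul f g => simp [dualDistribThree_tmul, hΔ]

theorem dualDistribThree_map_left
    (hΔ : ∀ (f : Module.Dual K G) (x y : G),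
      TensorProduct.dualDistrib K G G (Δ f) (x ⊗ₜ[K] y) = f (μ x y))
    (t : Module.Dual K G ⊗[K] Module.Dual K G) (x y z : G) :
    dualDistribThree K G (TensorProduct.assoc K _ _ _ (TensorProduct.map Δ α.dualMap t))
        (x ⊗ₜ[K] (y ⊗ₜ[K] z)) =
      TensorProduct.dualDistrib K G G t (μ x y ⊗ₜ[K] α z) := by
  induction t with
  | zero => simp
  | add a b ha hb => simp only [map_add, LinearMap.add_apply, ha, hb]
  | tmul f g => simp [dualDistribThree_assoc_tmul, hΔ]

end HomDual

/-- Let `(G, μ, α)` be a finite-dimensional Hom-algebra and let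
`Δ : G* → G* ⊗ G*` be the linear map determined by the pairing condition
`Σ f₍₁₎(x) f₍₂₎(y) = f (x y)` (via the canonical map `G* ⊗ G* → (G ⊗ G)*`, an
isomorphism in finite dimension). Then `(G*, Δ, α*)` is a Hom-coalgebra:
`(α* ⊗ Δ) ∘ Δ = (Δ ⊗ α*) ∘ Δ` (up to the associator) and
`Δ ∘ α* = (α* ⊗ α*) ∘ Δ`. -/
theorem dual_homCoalgebra_of_finiteDimensional
    {K : Type*} [Field K] {G : Type*} [AddCommGroup G] [Module K G]
    [FiniteDimensional K G]
    (μ : G →ₗ[K] G →ₗ[K] G) (α : G →ₗ[K] G)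
    (hassoc : ∀ g h k : G, μ (α g) (μ h k) = μ (μ g h) (α k))
    (hmult : ∀ g h : G, α (μ g h) = μ (α g) (α h))
    (Δ : Module.Dual K G →ₗ[K] (Module.Dual K G ⊗[K] Module.Dual K G))
    (hΔ : ∀ (f : Module.Dual K G) (x y : G),
      TensorProduct.dualDistrib K G G (Δ f) (x ⊗ₜ[K] y) = f (μ x y)) :
    (TensorProduct.map α.dualMap Δ) ∘ₗ Δ =
      (TensorProduct.assoc K (Module.Dual K G) (Module.Dual K G)
        (Module.Dual K G)).toLinearMap ∘ₗ (TensorProduct.map Δ α.dualMap) ∘ₗ Δ ∧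
    Δ ∘ₗ α.dualMap = (TensorProduct.map α.dualMap α.dualMap) ∘ₗ Δ := by
  refine ⟨LinearMap.ext fun f => HomDual.ext_three fun x y z => ?_,
    LinearMap.ext fun f => HomDual.ext_two fun x y => ?_⟩
  · simp only [LinearMap.comp_apply, LinearEquiv.coe_coe]
    rw [HomDual.dualDistribThree_map_right hΔ, HomDual.dualDistribThree_map_left hΔ, hΔ, hΔ,
      hassoc]
  · simp only [LinearMap.comp_apply]
    rw [HomDual.dualDistrib_map_dualMap, hΔ, hΔ, LinearMap.dualMap_apply, hmult]
end

section
/- Let (G, μ, α) be a finite-dimensional Hom-algebra over a field K with dual Hom-coalgebra (G*, Δ, α*), and let (M, ψ, γ) be a right Hom-module over G with M finite-dimensional. Let ψ* : M* → M* ⊗ G* be the unique linear map satisfying, for ψ*(m*) = Σ m*₍₀₎ ⊗ m*₍₁₎, the pairing condition Σ m*₍₀₎(m) m*₍₁₎(g) = m*(m·g) for all m ∈ M, g ∈ G, and let γ*(m*) = m* ∘ γ. Then (M*, ψ*, γ*) is a right Hom-comodule over (G*, Δ, α*): (ψ* ⊗ α*) ∘ ψ* = (γ* ⊗ Δ) ∘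 ψ* and ψ* ∘ γ* = (γ* ⊗ α*) ∘ ψ*. -/
/-!
For finite-dimensional spaces a tensor in `M* ⊗ G*` (or in `M* ⊗ (G* ⊗ G*)`) is determined by its
values on pure tensors of vectors, so both comodule identities may be checked on vectors.
There the coassociativity identity at `f` reads `f ((m·g)·α h) = f (γ m · gh)`, and the compatibility
of `ψ*` with `γ*` reads `f (γ (m·g)) = f (γ m · α g)`: these are the two Hom-module axioms, with `f`
applied. The lemmas `dualDistrib_ext` and `triplePairing_ext` provide the separation of tensors;
the remaining ones compute the pairings of the maps involved.
-/

open TensorProduct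

section

variable {K : Type*} [Field K] {G M : Type*}
  [AddCommGroup G] [Module K G] [AddCommGroup M] [Module K M]

/-- Finite dimensionality makes `M* ⊗ G* → (M ⊗ G)*` injective. -/
theorem dualDistrib_ext [FiniteDimensional K G] [FiniteDimensional K M]
    {s t : Module.Dual K M ⊗[K] Module.Dual K G}
    (h : ∀ (m : M) (g : G), dualDistrib K M G s (m ⊗ₜ[K] g) = dualDistrib K M G t (m ⊗ₜ[K] g)) :
    s = t :=
  (dualDistribEquiv K M G).injective (TensorProduct.ext' h)

/-- The pairing of `M* ⊗ (G* ⊗ G*)` with `M ⊗ (G ⊗ G)`, as a map into the dual of the latter. -/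
noncomputable def triplePairing (K G M : Type*) [Field K]
    [AddCommGroup G] [Module K G] [AddCommGroup M] [Module K M] :
    Module.Dual K M ⊗[K] (Module.Dual K G ⊗[K] Module.Dual K G) →ₗ[K]
      Module.Dual K (M ⊗[K] (G ⊗[K] G)) :=
  dualDistrib K M (G ⊗[K] G) ∘ₗ TensorProduct.map LinearMap.id (dualDistrib K G G)

theorem triplePairing_tmul (a : Module.Dual K M) (u : Module.Dual K G ⊗[K] Module.Dual K G)
    (m : M) (g h : G) :
    triplePairing K G M (a ⊗ₜ[K] u) (m ⊗ₜ[K] (g ⊗ₜ[K] h)) =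
      a m * dualDistrib K G G u (g ⊗ₜ[K] h) := by
  simp [triplePairing]

theorem triplePairing_ext [FiniteDimensional K G] [FiniteDimensional K M]
    {s t : Module.Dual K M ⊗[K] (Module.Dual K G ⊗[K] Module.Dual K G)}
    (H : ∀ (m : M) (g h : G), triplePairing K G M s (m ⊗ₜ[K] (g ⊗ₜ[K] h)) =
      triplePairing K G M t (m ⊗ₜ[K] (g ⊗ₜ[K] h))) :
    s = t := by
  have key : triplePairing K G M s = triplePairing K G M t := by
    ext m g h
    exact H m g h
  exact (TensorProduct.congr (LinearEquiv.refl K (Module.Dual K M))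
    (dualDistribEquiv K G G)).injective ((dualDistribEquiv K M (G ⊗[K] G)).injective key)

theorem triplePairing_assoc_tmul (s : Module.Dual K M ⊗[K] Module.Dual K G)
    (c : Module.Dual K G) (m : M) (g h : G) :
    triplePairing K G M (TensorProduct.assoc K _ _ _ (s ⊗ₜ[K] c)) (m ⊗ₜ[K] (g ⊗ₜ[K] h)) =
      dualDistrib K M G s (m ⊗ₜ[K] g) * c h := by
  induction s with
  | zero => simp
  | add x y hx hy => simp only [add_tmul, map_add, LinearMap.add_apply, hx, hy, add_mul]
  | tmul a b => simp [triplePairing_tmul, mul_assoc]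

theorem dualDistrib_map_dualMap (α : G →ₗ[K] G) (γ : M →ₗ[K] M)
    (t : Module.Dual K M ⊗[K] Module.Dual K G) (m : M) (g : G) :
    dualDistrib K M G (TensorProduct.map γ.dualMap α.dualMap t) (m ⊗ₜ[K] g) =
      dualDistrib K M G t (γ m ⊗ₜ[K] α g) := by
  induction t with
  | zero => simp
  | add x y hx hy => simp only [map_add, LinearMap.add_apply, hx, hy]
  | tmul a b => simp

/-- Pairing with `(ψ* ⊗ α*) t` amounts to pairing `t` with `(m·g) ⊗ α h`. -/
theorem triplePairing_assoc_map (α : G →ₗ[K] G) (ψ : M →ₗ[K] G →ₗ[K] M)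
    (ψs : Module.Dual K M →ₗ[K] (Module.Dual K M ⊗[K] Module.Dual K G))
    (hψs : ∀ (f : Module.Dual K M) (m : M) (g : G),
      dualDistrib K M G (ψs f) (m ⊗ₜ[K] g) = f (ψ m g))
    (t : Module.Dual K M ⊗[K] Module.Dual K G) (m : M) (g h : G) :
    triplePairing K G M (TensorProduct.assoc K _ _ _ (TensorProduct.map ψs α.dualMap t))
        (m ⊗ₜ[K] (g ⊗ₜ[K] h)) =
      dualDistrib K M G t (ψ m g ⊗ₜ[K] α h) := by
  induction t with
  | zero => simp
  | add x y hx hy => simp only [map_add, LinearMap.add_apply, hx, hy]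
  | tmul a b => simp [triplePairing_assoc_tmul, hψs]

/-- Pairing with `(γ* ⊗ Δ) t` amounts to pairing `t` with `γ m ⊗ gh`. -/
theorem triplePairing_map_comul (μ : G →ₗ[K] G →ₗ[K] G) (γ : M →ₗ[K] M)
    (Δ : Module.Dual K G →ₗ[K] (Module.Dual K G ⊗[K] Module.Dual K G))
    (hΔ : ∀ (f : Module.Dual K G) (x y : G),
      dualDistrib K G G (Δ f) (x ⊗ₜ[K] y) = f (μ x y))
    (t : Module.Dual K M ⊗[K] Module.Dual K G) (m : M) (g h : G) :
    triplePairing K G M (TensorProduct.map γ.dualMap Δ t) (m ⊗ₜ[K] (g ⊗ₜ[K] h)) =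
      dualDistrib K M G t (γ m ⊗ₜ[K] μ g h) := by
  induction t with
  | zero => simp
  | add x y hx hy => simp only [map_add, LinearMap.add_apply, hx, hy]
  | tmul a b => simp [triplePairing_tmul, hΔ]

end

/-- Let `(G, μ, α)` be a finite-dimensional Hom-algebra with dual
Hom-coalgebra `(G*, Δ, α*)` and let `(M, ψ, γ)` be a finite-dimensional right
Hom-module over `G`. Let `ψ* : M* → M* ⊗ G*` be determined by the pairing condition
`Σ m*₍₀₎(m) m*₍₁₎(g) = m*(m·g)` and `γ*(m*) = m* ∘ γ`. Then `(M*, ψ*, γ*)` is a right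
Hom-comodule over `(G*, Δ, α*)`:
`(ψ* ⊗ α*) ∘ ψ* = (γ* ⊗ Δ) ∘ ψ*` (up to the associator) and
`ψ* ∘ γ* = (γ* ⊗ α*) ∘ ψ*`. -/
theorem dual_homComodule_of_finiteDimensional
    {K : Type*} [Field K] {G M : Type*}
    [AddCommGroup G] [Module K G] [AddCommGroup M] [Module K M]
    [FiniteDimensional K G] [FiniteDimensional K M]
    (μ : G →ₗ[K] G →ₗ[K] G) (α : G →ₗ[K] G)
    (hassoc : ∀ g h k : G, μ (α g) (μ h k) = μ (μ g h) (α k))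
    (hmult : ∀ g h : G, α (μ g h) = μ (α g) (α h))
    (ψ : M →ₗ[K] G →ₗ[K] M) (γ : M →ₗ[K] M)
    (hMassoc : ∀ (m : M) (g h : G), ψ (ψ m g) (α h) = ψ (γ m) (μ g h))
    (hMmult : ∀ (m : M) (g : G), γ (ψ m g) = ψ (γ m) (α g))
    (Δ : Module.Dual K G →ₗ[K] (Module.Dual K G ⊗[K] Module.Dual K G))
    (hΔ : ∀ (f : Module.Dual K G) (x y : G),
      TensorProduct.dualDistrib K G G (Δ f) (x ⊗ₜ[K] y) = f (μ x y))
    (ψs : Module.Dual K M →ₗ[K] (Module.Dual K M ⊗[K] Module.Dual K G))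
    (hψs : ∀ (f : Module.Dual K M) (m : M) (g : G),
      TensorProduct.dualDistrib K M G (ψs f) (m ⊗ₜ[K] g) = f (ψ m g)) :
    (TensorProduct.assoc K (Module.Dual K M) (Module.Dual K G)
        (Module.Dual K G)).toLinearMap ∘ₗ (TensorProduct.map ψs α.dualMap) ∘ₗ ψs =
      (TensorProduct.map γ.dualMap Δ) ∘ₗ ψs ∧
    ψs ∘ₗ γ.dualMap = (TensorProduct.map γ.dualMap α.dualMap) ∘ₗ ψs := by
  constructor
  · refine LinearMap.ext fun f => triplePairing_ext fun m g h => ?_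
    simp only [LinearMap.comp_apply, LinearEquiv.coe_coe]
    rw [triplePairing_assoc_map α ψ ψs hψs, triplePairing_map_comul μ γ Δ hΔ, hψs, hψs, hMassoc]
  · refine LinearMap.ext fun f => dualDistrib_ext fun m g => ?_
    simp only [LinearMap.comp_apply]
    rw [dualDistrib_map_dualMap, hψs, hψs, LinearMap.dualMap_apply, hMmult]
end

section
/- Let (G, μ, α) be a Hom-algebra over a field K with α bijective, let (M, ψ, γ) be a right Hom-module over G, and let f ∈ M° (i.e. f ∈ M* with f(M·J) = 0 for some finite-codimensional Hom-ideal J of G). Then there exist a natural number n, functionals d₁,…,dₙ ∈ M° and e₁,…,eₙ ∈ G° such that f(m·g) = Σᵢ₌₁ⁿ dᵢ(m) eᵢ(g) for all m ∈ M and g ∈ G. -/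
/-- `M·I`: the span of all products `m·x` with `m ∈ M`, `x ∈ I`. -/
def mDot {K : Type*} [Field K] {G M : Type*}
    [AddCommGroup G] [Module K G] [AddCommGroup M] [Module K M]
    (ψ : M →ₗ[K] G →ₗ[K] M) (I : Submodule K G) : Submodule K M :=
  Submodule.span K {y : M | ∃ m : M, ∃ x ∈ I, ψ m x = y}

/-- The Sweedler dual of a right Hom-module, as a subset of the linear dual. -/
def modSweedlerDualSet {K : Type*} [Field K] {G M : Type*}
    [AddCommGroup G] [Module K G] [AddCommGroup M] [Module K M]
    (μ : G →ₗ[K] G →ₗ[K] G) (α : G →ₗ[K] G) (ψ : M →ₗ[K] G →ₗ[K] M) :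
    Set (Module.Dual K M) :=
  {f | ∃ I : Submodule K G, IsHomIdeal μ α I ∧ FiniteDimensional K (G ⧸ I) ∧
    mDot ψ I ≤ LinearMap.ker f}

/-- Let `(G, μ, α)` be a Hom-algebra with `α` bijective, `(M, ψ, γ)` a
right Hom-module over `G`, and `f ∈ M°`. Then there are finitely many
`d₁,…,dₙ ∈ M°` and `e₁,…,eₙ ∈ G°` with `f (m·g) = ∑ i, dᵢ m * eᵢ g` for all `m`, `g`. -/
theorem modSweedlerDual_action_split
    {K : Type*} [Field K] {G M : Type*}
    [AddCommGroup G] [Module K G] [AddCommGroup M] [Module K M]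
    (μ : G →ₗ[K] G →ₗ[K] G) (α : G →ₗ[K] G)
    (hassoc : ∀ g h k : G, μ (α g) (μ h k) = μ (μ g h) (α k))
    (hmult : ∀ g h : G, α (μ g h) = μ (α g) (α h))
    (hbij : Function.Bijective α)
    (ψ : M →ₗ[K] G →ₗ[K] M) (γ : M →ₗ[K] M)
    (hMassoc : ∀ (m : M) (g h : G), ψ (ψ m g) (α h) = ψ (γ m) (μ g h))
    (hMmult : ∀ (m : M) (g : G), γ (ψ m g) = ψ (γ m) (α g))
    (f : Module.Dual K M) (hf : f ∈ modSweedlerDualSet μ α ψ) :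
    ∃ (n : ℕ) (d : Fin n → Module.Dual K M) (e : Fin n → Module.Dual K G),
      (∀ i, d i ∈ modSweedlerDualSet μ α ψ) ∧ (∀ i, e i ∈ sweedlerDualSet μ α) ∧
      ∀ (m : M) (g : G), f (ψ m g) = ∑ i, d i m * e i g := by
  obtain ⟨J, hJ, hfin, hker⟩ := hf
  have hvanish : ∀ m : M, ∀ x ∈ J, f (ψ m x) = 0 := fun m x hx =>
    hker (Submodule.subset_span ⟨m, x, hx, rfl⟩)
  let b := Module.finBasis K (G ⧸ J)
  choose r hr using fun i => J.mkQ_surjective (b i)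
  refine ⟨_, fun i => f ∘ₗ ψ.flip (r i), fun i => b.coord i ∘ₗ J.mkQ, ?_, ?_, ?_⟩
  · refine fun i => ⟨J, hJ, hfin, Submodule.span_le.2 ?_⟩
    rintro _ ⟨m, x, hx, rfl⟩
    obtain ⟨h, hh⟩ := hbij.surjective (r i)
    change f (ψ (ψ m x) (r i)) = 0
    rw [← hh, hMassoc]
    exact hvanish _ _ (hJ.2.1 h x hx)
  · intro i
    refine ⟨J, hJ, hfin, fun x hx => ?_⟩
    have hx0 : J.mkQ x = 0 := by simpa using hx
    rw [LinearMap.mem_ker, LinearMap.comp_apply, hx0, map_zero]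
  · intro m g
    have hmem : g - ∑ i, b.repr (J.mkQ g) i • r i ∈ J := by
      refine (Submodule.Quotient.mk_eq_zero J).1 ?_
      change J.mkQ _ = 0
      rw [map_sub, map_sum]
      simp only [map_smul, hr]
      rw [b.sum_repr, sub_self]
    have h0 := hvanish m _ hmem
    rw [map_sub, map_sub, sub_eq_zero] at h0
    rw [h0]
    simp [mul_comm]
end

section
/- Let (G, μ, α) be a Hom-algebra over a field K with α bijective, and let (M, ψ, γ) be a right Hom-module over G. Let (G°, Δ, α°) be the Sweedler-dual Hom-coalgebra of G, with Δ determined by Σ f₍₁₎(x) f₍₂₎(y) = f(xy) and α°(f) = f ∘ α. Then there exists a linear map ψ° : M° → M° ⊗ G° such that for every f ∈ M°, writing ψ°(f) = Σ f₍₀₎ ⊗ f₍₁₎, one has Σ f₍₀₎(m) f₍₁₎(g) = f(m·g) for all m ∈ M, g ∈ G, and with γ°(f) = f ∘ γ (which maps M° into M°), the triple (M°, ψ°, γ°) is a right Hom-comodule over (G°, Δ, α°): (ψ° ⊗ α°) ∘ ψ° = (γ° ⊗ Δ) ∘ ψ° and (γ° ⊗ α°) ∘ ψ° = ψ° ∘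 γ°. -/
/-!
Over a field, a tensor `t ∈ V ⊗ W` is determined by the scalars `(φ ⊗ χ)(t)` with `φ`, `χ` running
over separating families of functionals on `V` and `W`
(`eq_of_forall_pairing_eq`). Hence `M° ⊗ G°` and `M° ⊗ (G° ⊗ G°)` embed into the
functions on `M × G` and `M × G × G`: a tensor `ψ°(f)` with the prescribed pairing is
unique and linear in `f`, and the two comodule identities need only be checked after evaluation,
where they become the identities `(m·g)·α(h) = γ(m)·(gh)` and `γ(m·g) = γ(m)·α(g)`
of the module.

For existence, let `f` vanish on `M·I`. With a basis of `G/I`, lifted to elements `gᵢ` and with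
coordinate functionals `eᵢ ∈ G°`, one has `f(m·g) = ∑ᵢ f(m·gᵢ) eᵢ(g)`. It remains to see that
`f(- · gᵢ) ∈ M°`, and this is where surjectivity of `α` enters: writing `gᵢ = α(h)`, for `x ∈ I` one
gets `(m·x)·α(h) = γ(m)·(xh) ∈ M·I`, so the same ideal `I` works.
-/

open TensorProduct

lemma mDot_mono {K : Type*} [Field K] {G M : Type*}
    [AddCommGroup G] [Module K G] [AddCommGroup M] [Module K M]
    (ψ : M →ₗ[K] G →ₗ[K] M) {I I' : Submodule K G} (h : I ≤ I') :
    mDot ψ I ≤ mDot ψ I' := by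
  apply Submodule.span_mono
  rintro y ⟨m, x, hx, rfl⟩
  exact ⟨m, x, h hx, rfl⟩

/-- The Sweedler dual of a right Hom-module, as a submodule of the linear dual. -/
def ModSweedlerDual {K : Type*} [Field K] {G M : Type*}
    [AddCommGroup G] [Module K G] [AddCommGroup M] [Module K M]
    (μ : G →ₗ[K] G →ₗ[K] G) (α : G →ₗ[K] G) (ψ : M →ₗ[K] G →ₗ[K] M) :
    Submodule K (Module.Dual K M) where
  carrier := {f | ∃ I : Submodule K G, IsHomIdeal μ α I ∧ FiniteDimensional K (G ⧸ I) ∧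
    mDot ψ I ≤ LinearMap.ker f}
  zero_mem' := by
    refine ⟨⊤, ⟨fun _ _ _ => trivial, fun _ _ _ => trivial, fun _ _ => trivial⟩, ?_, ?_⟩
    · infer_instance
    · simp
  add_mem' := by
    rintro f g ⟨J, hJ, hfJ, hkJ⟩ ⟨H, hH, hfH, hkH⟩
    refine ⟨J ⊓ H,
      ⟨fun a x hx => ⟨hJ.1 a x hx.1, hH.1 a x hx.2⟩,
       fun a x hx => ⟨hJ.2.1 a x hx.1, hH.2.1 a x hx.2⟩,
       fun x hx => ⟨hJ.2.2 x hx.1, hH.2.2 x hx.2⟩⟩,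
      finiteDimensional_quot_inf J H hfJ hfH, ?_⟩
    intro y hy
    have h1 : f y = 0 := hkJ (mDot_mono ψ inf_le_left hy)
    have h2 : g y = 0 := hkH (mDot_mono ψ inf_le_right hy)
    simp [LinearMap.mem_ker, h1, h2]
  smul_mem' := by
    rintro c f ⟨J, hJ, hfJ, hkJ⟩
    refine ⟨J, hJ, hfJ, fun y hy => ?_⟩
    have h1 : f y = 0 := hkJ hy
    simp [LinearMap.mem_ker, h1]

/-- The map `γ° : M° → M°`, `f ↦ f ∘ γ`. -/
noncomputable def gammaCirc {K : Type*} [Field K] {G M : Type*}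
    [AddCommGroup G] [Module K G] [AddCommGroup M] [Module K M]
    (μ : G →ₗ[K] G →ₗ[K] G) (α : G →ₗ[K] G)
    (ψ : M →ₗ[K] G →ₗ[K] M) (γ : M →ₗ[K] M)
    (hMmult : ∀ (m : M) (g : G), γ (ψ m g) = ψ (γ m) (α g)) :
    ModSweedlerDual μ α ψ →ₗ[K] ModSweedlerDual μ α ψ :=
  LinearMap.codRestrict (ModSweedlerDual μ α ψ)
    (γ.dualMap ∘ₗ (ModSweedlerDual μ α ψ).subtype) (by
      rintro ⟨f, J, hJ, hfin, hker⟩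
      refine ⟨J, hJ, hfin, Submodule.span_le.mpr ?_⟩
      rintro y ⟨m, x, hx, rfl⟩
      have : f (γ (ψ m x)) = 0 := by
        rw [hMmult]
        exact hker (Submodule.subset_span ⟨γ m, α x, hJ.2.2 x hx, rfl⟩)
      simpa [LinearMap.mem_ker] using this)

namespace HomComodule

section Separation

variable {K : Type*} [Field K] {V W : Type*} [AddCommMonoid V] [Module K V]
  [AddCommMonoid W] [Module K W]

/-- The functional `v ⊗ w ↦ φ(v) χ(w)` on `V ⊗ W`. -/
noncomputable def pairing (φ : V →ₗ[K] K) (χ : W →ₗ[K] K) : V ⊗[K] W →ₗ[K] K :=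
  (TensorProduct.lid K K).toLinearMap ∘ₗ TensorProduct.map φ χ

@[simp] lemma pairing_tmul (φ : V →ₗ[K] K) (χ : W →ₗ[K] K) (v : V) (w : W) :
    pairing φ χ (v ⊗ₜ[K] w) = φ v * χ w := by
  simp [pairing]

lemma pairing_assoc_symm {X : Type*} [AddCommMonoid X] [Module K X] (φ : V →ₗ[K] K)
    (χ : W →ₗ[K] K) (ξ : X →ₗ[K] K) (t : V ⊗[K] (W ⊗[K] X)) :
    pairing (pairing φ χ) ξ ((TensorProduct.assoc K V W X).symm t) =
      pairing φ (pairing χ ξ) t := by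
  have : pairing (pairing φ χ) ξ ∘ₗ (TensorProduct.assoc K V W X).symm.toLinearMap =
      pairing φ (pairing χ ξ) := by
    ext v w x
    simp [mul_assoc]
  exact LinearMap.congr_fun this t

/-- Products of functionals from separating families separate the points of `V ⊗ W`: expand in a
basis of `W` and compare coefficients. -/
lemma eq_of_forall_pairing_eq {ι κ : Type*}
    (φ : ι → V →ₗ[K] K) (χ : κ → W →ₗ[K] K)
    (hφ : ∀ v v', (∀ i, φ i v = φ i v') → v = v') (hχ : ∀ w w', (∀ j, χ j w = χ j w') → w = w')
    (s t : V ⊗[K] W) (h : ∀ i j, pairing (φ i) (χ j) s = pairing (φ i) (χ j) t) : s = t := by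
  -- Over a field negation is `(-1) • ·`, so `W` is a vector space in the usual sense, hence free.
  let : AddCommGroup W := Module.addCommMonoidToAddCommGroup K
  have : Module.Free K W := Module.Free.of_divisionRing K W
  let b := Module.Free.chooseBasis K W
  obtain ⟨c, rfl⟩ := (TensorProduct.equivFinsuppOfBasisRight (M := V) b).symm.surjective s
  obtain ⟨d, rfl⟩ := (TensorProduct.equivFinsuppOfBasisRight (M := V) b).symm.surjective t
  simp only [TensorProduct.equivFinsuppOfBasisRight_symm_apply] at h
  congr 1
  ext k
  refine hφ _ _ fun i => ?_
  have hw : (c.sum fun k v => φ i v • b k) = d.sum fun k v => φ i v • b k := by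
    refine hχ _ _ fun j => ?_
    simpa [Finsupp.sum, map_sum] using h i j
  have hl : Finsupp.mapRange (φ i) (map_zero _) c = Finsupp.mapRange (φ i) (map_zero _) d := by
    apply b.repr.symm.injective
    simp only [Module.Basis.repr_symm_apply, Finsupp.linearCombination_apply]
    rw [Finsupp.sum_mapRange_index (by simp), Finsupp.sum_mapRange_index (by simp)]
    exact hw
  simpa using DFunLike.congr_fun hl k

end Separation

section Dual

variable {K : Type*} [Field K] {G M : Type*}
    [AddCommGroup G] [Module K G] [AddCommGroup M] [Module K M]

/-- Evaluation at `x`, as a functional on a space `S` of functionals. -/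
def ev (S : Submodule K (Module.Dual K M)) (x : M) : S →ₗ[K] K :=
  LinearMap.applyₗ x ∘ₗ S.subtype

@[simp] lemma ev_apply (S : Submodule K (Module.Dual K M)) (x : M) (f : S) :
    ev S x f = (f : Module.Dual K M) x := rfl

lemma ev_separating (S : Submodule K (Module.Dual K M)) (f f' : S)
    (h : ∀ x, ev S x f = ev S x f') : f = f' :=
  Subtype.ext (LinearMap.ext h)

lemma dualDistrib_map_subtype (S : Submodule K (Module.Dual K M))
    (T : Submodule K (Module.Dual K G)) (t : S ⊗[K] T) (m : M) (g : G) :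
    TensorProduct.dualDistrib K M G (TensorProduct.map S.subtype T.subtype t) (m ⊗ₜ[K] g) =
      pairing (ev S m) (ev T g) t := by
  induction t with
  | zero => simp
  | tmul a b => simp
  | add a b ha hb => simp only [map_add, LinearMap.add_apply, ha, hb]

/-- The map from `S ⊗ T` to the functions on `M × G`, `f ⊗ k ↦ ((m, g) ↦ f(m) k(g))`. -/
noncomputable def evPair (S : Submodule K (Module.Dual K M)) (T : Submodule K (Module.Dual K G)) :
    S ⊗[K] T →ₗ[K] (M → G → K) :=
  LinearMap.pi fun m => LinearMap.pi fun g => pairing (ev S m) (ev T g)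

lemma evPair_injective (S : Submodule K (Module.Dual K M)) (T : Submodule K (Module.Dual K G)) :
    Function.Injective (evPair S T) := by
  intro s t hst
  exact eq_of_forall_pairing_eq _ _ (ev_separating S) (ev_separating T) s t
    fun m g => congrFun (congrFun hst m) g

variable (μ : G →ₗ[K] G →ₗ[K] G) (α : G →ₗ[K] G) (ψ : M →ₗ[K] G →ₗ[K] M) (γ : M →ₗ[K] M)

/-- If `f` vanishes on `M·I`, then so does `f(- · g)`, because `g` lies in the image of `α`. -/
lemma mDot_le_ker_translate (hsurj : Function.Surjective α)
    (hMassoc : ∀ (m : M) (g h : G), ψ (ψ m g) (α h) = ψ (γ m) (μ g h))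
    {I : Submodule K G} (hI : IsHomIdeal μ α I) {f : Module.Dual K M}
    (hf : mDot ψ I ≤ LinearMap.ker f) (g : G) :
    mDot ψ I ≤ LinearMap.ker (f ∘ₗ ψ.flip g) := by
  refine Submodule.span_le.mpr ?_
  rintro _ ⟨m, x, hx, rfl⟩
  obtain ⟨h, rfl⟩ := hsurj g
  have : f (ψ (γ m) (μ x h)) = 0 :=
    hf (Submodule.subset_span ⟨γ m, μ x h, hI.2.1 h x hx, rfl⟩)
  simpa [hMassoc] using this

lemma exists_coaction_tensor (hsurj : Function.Surjective α)
    (hMassoc : ∀ (m : M) (g h : G), ψ (ψ m g) (α h) = ψ (γ m) (μ g h))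
    (f : ModSweedlerDual μ α ψ) :
    ∃ t : ModSweedlerDual μ α ψ ⊗[K] SweedlerDual μ α,
      evPair _ _ t = fun m g => (f : Module.Dual K M) (ψ m g) := by
  obtain ⟨f, I, hI, hfin, hf⟩ := f
  let b := Module.finBasis K (G ⧸ I)
  choose r hr using fun i => I.mkQ_surjective (b i)
  let F : Fin (Module.finrank K (G ⧸ I)) → ModSweedlerDual μ α ψ := fun i =>
    ⟨f ∘ₗ ψ.flip (r i), I, hI, hfin, mDot_le_ker_translate μ α ψ γ hsurj hMassoc hI hf (r i)⟩
  let E : Fin (Module.finrank K (G ⧸ I)) → SweedlerDual μ α := fun i =>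
    ⟨b.coord i ∘ₗ I.mkQ, I, hI, hfin, fun x hx => by
      simp [(Submodule.Quotient.mk_eq_zero I).mpr hx]⟩
  refine ⟨∑ i, F i ⊗ₜ[K] E i, ?_⟩
  funext m g
  -- `g` and `∑ i, eᵢ(g) gᵢ` have the same class in `G/I`.
  have hmem : g - ∑ i, b.coord i (I.mkQ g) • r i ∈ I := by
    rw [← Submodule.Quotient.mk_eq_zero, ← Submodule.mkQ_apply, map_sub, map_sum]
    simp only [map_smul, hr, Module.Basis.coord_apply, b.sum_repr, sub_self]
  have h0 : f (ψ m (g - ∑ i, b.coord i (I.mkQ g) • r i)) = 0 :=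
    hf (Submodule.subset_span ⟨m, _, hmem, rfl⟩)
  rw [map_sub, map_sub, sub_eq_zero] at h0
  simp only [evPair, LinearMap.pi_apply, map_sum, pairing_tmul, ev_apply, F, E, h0, map_smul,
    LinearMap.comp_apply, LinearMap.flip_apply, smul_eq_mul, mul_comm]

/-- The map sending `f` to the function `(m, g) ↦ f(m·g)`. -/
def actFun : ModSweedlerDual μ α ψ →ₗ[K] (M → G → K) where
  toFun f := fun m g => (f : Module.Dual K M) (ψ m g)
  map_add' _ _ := rfl
  map_smul' _ _ := rfl

lemma exists_coaction (hsurj : Function.Surjective α)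
    (hMassoc : ∀ (m : M) (g h : G), ψ (ψ m g) (α h) = ψ (γ m) (μ g h)) :
    ∃ ψc : ModSweedlerDual μ α ψ →ₗ[K] (ModSweedlerDual μ α ψ ⊗[K] SweedlerDual μ α),
      ∀ f m g, pairing (ev _ m) (ev _ g) (ψc f) = (f : Module.Dual K M) (ψ m g) := by
  let e := LinearEquiv.ofInjective (evPair (ModSweedlerDual μ α ψ) (SweedlerDual μ α))
    (evPair_injective _ _)
  let a := (actFun μ α ψ).codRestrict (LinearMap.range (evPair _ (SweedlerDual μ α)))
    fun f => exists_coaction_tensor μ α ψ γ hsurj hMassoc f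
  refine ⟨e.symm.toLinearMap ∘ₗ a, fun f m g => ?_⟩
  have h : e (e.symm (a f)) = a f := e.apply_symm_apply _
  exact congrFun (congrFun (congrArg Subtype.val h) m) g

end Dual

end HomComodule

/-- Let `(G, μ, α)` be a Hom-algebra with `α` bijective, `(M, ψ, γ)`
a right Hom-module over `G`, and `(G°, Δ, α°)` the Sweedler-dual Hom-coalgebra. Then
there is a linear map `ψ° : M° → M° ⊗ G°` satisfying the pairing condition
`Σ f₍₀₎(m) f₍₁₎(g) = f (m·g)`, and with `γ°(f) = f ∘ γ`, the triple `(M°, ψ°, γ°)` is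
a right Hom-comodule over `(G°, Δ, α°)`:
`(ψ° ⊗ α°) ∘ ψ° = (γ° ⊗ Δ) ∘ ψ°` (up to the associator) and
`(γ° ⊗ α°) ∘ ψ° = ψ° ∘ γ°`. -/
theorem modSweedlerDual_homComodule
    {K : Type*} [Field K] {G M : Type*}
    [AddCommGroup G] [Module K G] [AddCommGroup M] [Module K M]
    (μ : G →ₗ[K] G →ₗ[K] G) (α : G →ₗ[K] G)
    (hassoc : ∀ g h k : G, μ (α g) (μ h k) = μ (μ g h) (α k))
    (hmult : ∀ g h : G, α (μ g h) = μ (α g) (α h))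
    (hbij : Function.Bijective α)
    (ψ : M →ₗ[K] G →ₗ[K] M) (γ : M →ₗ[K] M)
    (hMassoc : ∀ (m : M) (g h : G), ψ (ψ m g) (α h) = ψ (γ m) (μ g h))
    (hMmult : ∀ (m : M) (g : G), γ (ψ m g) = ψ (γ m) (α g))
    (Δ : SweedlerDual μ α →ₗ[K] (SweedlerDual μ α ⊗[K] SweedlerDual μ α))
    (hΔ : ∀ (f : SweedlerDual μ α) (x y : G),
      TensorProduct.dualDistrib K G G
        (TensorProduct.map (SweedlerDual μ α).subtype (SweedlerDual μ α).subtype (Δ f))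
        (x ⊗ₜ[K] y) = (f : Module.Dual K G) (μ x y)) :
    ∃ ψc : ModSweedlerDual μ α ψ →ₗ[K] (ModSweedlerDual μ α ψ ⊗[K] SweedlerDual μ α),
      (∀ (f : ModSweedlerDual μ α ψ) (m : M) (g : G),
        TensorProduct.dualDistrib K M G
          (TensorProduct.map (ModSweedlerDual μ α ψ).subtype (SweedlerDual μ α).subtype (ψc f))
          (m ⊗ₜ[K] g) = (f : Module.Dual K M) (ψ m g)) ∧
      (TensorProduct.assoc K (ModSweedlerDual μ α ψ) (SweedlerDual μ α)
          (SweedlerDual μ α)).toLinearMap ∘ₗ (TensorProduct.map ψc (alphaCirc μ α)) ∘ₗ ψc =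
        (TensorProduct.map (gammaCirc μ α ψ γ hMmult) Δ) ∘ₗ ψc ∧
      (TensorProduct.map (gammaCirc μ α ψ γ hMmult) (alphaCirc μ α)) ∘ₗ ψc =
        ψc ∘ₗ gammaCirc μ α ψ γ hMmult := by
  obtain ⟨ψc, hψ⟩ := HomComodule.exists_coaction μ α ψ γ hbij.2 hMassoc
  simp only [HomComodule.dualDistrib_map_subtype] at hΔ ⊢
  refine ⟨ψc, hψ, ?_, ?_⟩
  · ext1 f
    apply (TensorProduct.assoc K _ _ _).symm.injective
    refine HomComodule.eq_of_forall_pairing_eq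
      (fun p : M × G => HomComodule.pairing (HomComodule.ev (ModSweedlerDual μ α ψ) p.1)
        (HomComodule.ev (SweedlerDual μ α) p.2))
      (HomComodule.ev (SweedlerDual μ α)) ?_ (HomComodule.ev_separating _) _ _ ?_
    · exact fun s t hst => HomComodule.evPair_injective _ _
        (funext fun m => funext fun g => hst (m, g))
    rintro ⟨m, g⟩ h
    have hL : ∀ t, HomComodule.pairing
        (HomComodule.pairing (HomComodule.ev _ m) (HomComodule.ev _ g)) (HomComodule.ev _ h)
        (TensorProduct.map ψc (alphaCirc μ α) t) =
        HomComodule.pairing (HomComodule.ev _ (ψ m g)) (HomComodule.ev _ (α h)) t := by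
      intro t
      induction t with
      | zero => simp
      | add a b ha hb => simp only [map_add, ha, hb]
      | tmul a b => simp [hψ, alphaCirc]
    have hR : ∀ t, HomComodule.pairing (HomComodule.ev _ m)
        (HomComodule.pairing (HomComodule.ev _ g) (HomComodule.ev _ h))
        (TensorProduct.map (gammaCirc μ α ψ γ hMmult) Δ t) =
        HomComodule.pairing (HomComodule.ev _ (γ m)) (HomComodule.ev _ (μ g h)) t := by
      intro t
      induction t with
      | zero => simp
      | add a b ha hb => simp only [map_add, ha, hb]
      | tmul a b => simp [hΔ, gammaCirc]
    simp only [LinearMap.comp_apply, LinearEquiv.coe_coe, LinearEquiv.symm_apply_apply,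
      HomComodule.pairing_assoc_symm]
    rw [hL, hR, hψ, hψ, hMassoc]
  · ext1 f
    apply HomComodule.evPair_injective
    funext m g
    have hL : ∀ t, HomComodule.pairing (HomComodule.ev _ m) (HomComodule.ev _ g)
        (TensorProduct.map (gammaCirc μ α ψ γ hMmult) (alphaCirc μ α) t) =
        HomComodule.pairing (HomComodule.ev _ (γ m)) (HomComodule.ev _ (α g)) t := by
      intro t
      induction t with
      | zero => simp
      | add a b ha hb => simp only [map_add, ha, hb]
      | tmul a b => simp [gammaCirc, alphaCirc]
    refine (hL (ψc f)).trans ((hψ f _ _).trans (Eq.trans ?_ (hψ _ m g).symm))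
    rw [← hMmult]
    rfl
end

section
/- Let (G, μ, α) be a Hom-algebra over a field K with α bijective, let (M, ψ, γ) and (N, ψ', γ') be right Hom-modules over G, and let σ : M → N be a morphism of right Hom-modules. Let ψ° : M° → M° ⊗ G° and ψ'° : N° → N° ⊗ G° be the Sweedler-dual coactions determined by the pairing conditions Σ f₍₀₎(m) f₍₁₎(g) = f(m·g), and set γ°(f) = f ∘ γ, γ'°(f) = f ∘ γ', α°(e) = e ∘ α. Then σ° : N° → M° defined by σ°(f) = f ∘ σ (which indeed maps N° into M°) is a morphism of right Hom-comodules over G°: (σ° ⊗ α°) ∘ ψ'° = ψ° ∘ σ° and γ° ∘ σ° = σ° ∘ γ'°. -/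
/-!
Elements of `M° ⊗ G°` are determined by their pairing with `M × G`: over a field the canonical map
`M* ⊗ G* → (M ⊗ G)*` is injective (`dualDistrib_injective`), and `M° ⊗ G° → M* ⊗ G*` is injective
because everything is flat. Pairing both sides of the comodule identity with `m ⊗ g` gives
`f (σ m · α g)` on the left and `f (σ (m · g))` on the right, which agree because `σ` is a
morphism of Hom-modules. Compatibility with the twisting maps is immediate from `γ' ∘ σ = σ ∘ γ`.
-/

open TensorProduct

/-- The map `σ° : N° → M°`, `f ↦ f ∘ σ`, induced by a morphism `σ` of right
Hom-modules. -/
noncomputable def sigmaCirc {K : Type*} [Field K] {G M N : Type*}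
    [AddCommGroup G] [Module K G] [AddCommGroup M] [Module K M] [AddCommGroup N] [Module K N]
    (μ : G →ₗ[K] G →ₗ[K] G) (α : G →ₗ[K] G)
    (ψ : M →ₗ[K] G →ₗ[K] M) (ψ' : N →ₗ[K] G →ₗ[K] N)
    (σ : M →ₗ[K] N)
    (hσ : ∀ (m : M) (g : G), σ (ψ m g) = ψ' (σ m) (α g)) :
    ModSweedlerDual μ α ψ' →ₗ[K] ModSweedlerDual μ α ψ :=
  LinearMap.codRestrict (ModSweedlerDual μ α ψ)
    (σ.dualMap ∘ₗ (ModSweedlerDual μ α ψ').subtype) (by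
      rintro ⟨f, J, hJ, hfin, hker⟩
      refine ⟨J, hJ, hfin, Submodule.span_le.mpr ?_⟩
      rintro y ⟨m, x, hx, rfl⟩
      have : f (σ (ψ m x)) = 0 := by
        rw [hσ]
        exact hker (Submodule.subset_span ⟨σ m, α x, hJ.2.2 x hx, rfl⟩)
      simpa [LinearMap.mem_ker] using this)

/-- Over a field, the canonical map `M* ⊗ N* → (M ⊗ N)*` is injective, without any finiteness
assumption. -/
lemma dualDistrib_injective {K : Type*} [Field K] {M N : Type*}
    [AddCommGroup M] [Module K M] [AddCommGroup N] [Module K N] :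
    Function.Injective (TensorProduct.dualDistrib K M N) := by
  classical
  rw [injective_iff_map_eq_zero]
  intro t ht
  let c := Module.Basis.ofVectorSpace K (Module.Dual K N)
  -- Write `t = ∑ i, b i ⊗ c i` with respect to a basis `c` of `N*`.
  obtain ⟨b, rfl⟩ :=
    (TensorProduct.equivFinsuppOfBasisRight (M := Module.Dual K M) c).symm.surjective t
  suffices h : b = 0 by rw [h, map_zero]
  rw [TensorProduct.equivFinsuppOfBasisRight_symm_apply] at ht
  ext i m
  -- Evaluating the first leg at `m` gives a linear relation among the `c i`.
  have hrel : ∑ j ∈ b.support, b j m • c j = 0 := by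
    ext n
    have := LinearMap.congr_fun ht (m ⊗ₜ[K] n)
    simpa [Finsupp.sum, LinearMap.sum_apply] using this
  by_cases hi : i ∈ b.support
  · exact linearIndependent_iff'.mp c.linearIndependent _ _ hrel i hi
  · simp [Finsupp.notMem_support_iff.mp hi]

lemma flat_submodule {K : Type*} [Field K] {V : Type*} [AddCommGroup V] [Module K V]
    (Q : Submodule K V) : Module.Flat K Q :=
  inferInstance

/-- An element of `P ⊗ Q`, for subspaces `P ⊆ M*` and `Q ⊆ N*`, is determined by its pairing with
pure tensors. -/
lemma ext_of_dualDistrib_s17 {K : Type*} [Field K] {M N : Type*}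
    [AddCommGroup M] [Module K M] [AddCommGroup N] [Module K N]
    {P : Submodule K (Module.Dual K M)} {Q : Submodule K (Module.Dual K N)} {s t : P ⊗[K] Q}
    (h : ∀ (m : M) (n : N),
      TensorProduct.dualDistrib K M N (TensorProduct.map P.subtype Q.subtype s) (m ⊗ₜ[K] n) =
      TensorProduct.dualDistrib K M N (TensorProduct.map P.subtype Q.subtype t) (m ⊗ₜ[K] n)) :
    s = t :=
  have : Module.Flat K Q := flat_submodule (V := Module.Dual K N) Q
  TensorProduct.map_injective_of_flat_flat _ _ P.subtype_injective Q.subtype_injective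
    (dualDistrib_injective (TensorProduct.ext' h))

/-- The map `σ° ⊗ α°` is adjoint to `σ ⊗ α` for the pairing. -/
lemma dualDistrib_map_sigmaCirc_alphaCirc {K : Type*} [Field K] {G M N : Type*}
    [AddCommGroup G] [Module K G] [AddCommGroup M] [Module K M] [AddCommGroup N] [Module K N]
    (μ : G →ₗ[K] G →ₗ[K] G) (α : G →ₗ[K] G)
    (ψ : M →ₗ[K] G →ₗ[K] M) (ψ' : N →ₗ[K] G →ₗ[K] N) (σ : M →ₗ[K] N)
    (hσ : ∀ (m : M) (g : G), σ (ψ m g) = ψ' (σ m) (α g))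
    (t : ModSweedlerDual μ α ψ' ⊗[K] SweedlerDual μ α) (m : M) (g : G) :
    TensorProduct.dualDistrib K M G
      (TensorProduct.map (ModSweedlerDual μ α ψ).subtype (SweedlerDual μ α).subtype
        (TensorProduct.map (sigmaCirc μ α ψ ψ' σ hσ) (alphaCirc μ α) t)) (m ⊗ₜ[K] g) =
    TensorProduct.dualDistrib K N G
      (TensorProduct.map (ModSweedlerDual μ α ψ').subtype (SweedlerDual μ α).subtype t)
      (σ m ⊗ₜ[K] α g) := by
  induction t with
  | zero => simp
  | add x y hx hy => simp only [map_add, LinearMap.add_apply, hx, hy]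
  | tmul f e => simp [sigmaCirc, alphaCirc]

/-- Let `(G, μ, α)` be a Hom-algebra with `α` bijective, let
`(M, ψ, γ)` and `(N, ψ', γ')` be right Hom-modules over `G`, and let `σ : M → N` be a
morphism of right Hom-modules. With the Sweedler-dual coactions `ψ°`, `ψ'°`
(characterized by the pairing conditions) and `γ°(f) = f ∘ γ`, `γ'°(f) = f ∘ γ'`,
`α°(e) = e ∘ α`, the map `σ° : N° → M°`, `f ↦ f ∘ σ`, is a morphism of right
Hom-comodules over `G°`: `(σ° ⊗ α°) ∘ ψ'° = ψ° ∘ σ°` and `γ° ∘ σ° = σ° ∘ γ'°`. -/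
theorem sigmaCirc_homComodule_morphism
    {K : Type*} [Field K] {G M N : Type*}
    [AddCommGroup G] [Module K G] [AddCommGroup M] [Module K M] [AddCommGroup N] [Module K N]
    (μ : G →ₗ[K] G →ₗ[K] G) (α : G →ₗ[K] G)
    (hassoc : ∀ g h k : G, μ (α g) (μ h k) = μ (μ g h) (α k))
    (hmult : ∀ g h : G, α (μ g h) = μ (α g) (α h))
    (hbij : Function.Bijective α)
    (ψ : M →ₗ[K] G →ₗ[K] M) (γ : M →ₗ[K] M)
    (hMassoc : ∀ (m : M) (g h : G), ψ (ψ m g) (α h) = ψ (γ m) (μ g h))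
    (hMmult : ∀ (m : M) (g : G), γ (ψ m g) = ψ (γ m) (α g))
    (ψ' : N →ₗ[K] G →ₗ[K] N) (γ' : N →ₗ[K] N)
    (hNassoc : ∀ (n : N) (g h : G), ψ' (ψ' n g) (α h) = ψ' (γ' n) (μ g h))
    (hNmult : ∀ (n : N) (g : G), γ' (ψ' n g) = ψ' (γ' n) (α g))
    (σ : M →ₗ[K] N)
    (hσ : ∀ (m : M) (g : G), σ (ψ m g) = ψ' (σ m) (α g))
    (hσγ : ∀ m : M, γ' (σ m) = σ (γ m))
    (ψc : ModSweedlerDual μ α ψ →ₗ[K] (ModSweedlerDual μ α ψ ⊗[K] SweedlerDual μ α))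
    (hψc : ∀ (f : ModSweedlerDual μ α ψ) (m : M) (g : G),
      TensorProduct.dualDistrib K M G
        (TensorProduct.map (ModSweedlerDual μ α ψ).subtype (SweedlerDual μ α).subtype (ψc f))
        (m ⊗ₜ[K] g) = (f : Module.Dual K M) (ψ m g))
    (ψ'c : ModSweedlerDual μ α ψ' →ₗ[K] (ModSweedlerDual μ α ψ' ⊗[K] SweedlerDual μ α))
    (hψ'c : ∀ (f : ModSweedlerDual μ α ψ') (n : N) (g : G),
      TensorProduct.dualDistrib K N G
        (TensorProduct.map (ModSweedlerDual μ α ψ').subtype (SweedlerDual μ α).subtype (ψ'c f))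
        (n ⊗ₜ[K] g) = (f : Module.Dual K N) (ψ' n g)) :
    (TensorProduct.map (sigmaCirc μ α ψ ψ' σ hσ) (alphaCirc μ α)) ∘ₗ ψ'c =
      ψc ∘ₗ sigmaCirc μ α ψ ψ' σ hσ ∧
    gammaCirc μ α ψ γ hMmult ∘ₗ sigmaCirc μ α ψ ψ' σ hσ =
      sigmaCirc μ α ψ ψ' σ hσ ∘ₗ gammaCirc μ α ψ' γ' hNmult := by
  refine ⟨LinearMap.ext fun f => ext_of_dualDistrib_s17 fun m g => ?_,
    LinearMap.ext fun f => Subtype.ext (LinearMap.ext fun m => ?_)⟩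
  · rw [LinearMap.comp_apply, LinearMap.comp_apply, dualDistrib_map_sigmaCirc_alphaCirc, hψ'c, hψc,
      ← hσ]
    rfl
  · exact congrArg (f : Module.Dual K N) (hσγ m).symm
end
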